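/- Let G be a simple graph on the vertex set {1,…,n} with n ≥ 1, let c ≥ 1 be an integer, and define the polynomials p_{k,i} over ℕ by p_{1,i} = x_i^c and p_{k+1,i} = x_i^c · (Σ_{j adjacent to i} p_{k,j}), and p(G,k) = Σ_{i=1}^n p_{k,i}. Then G has a Hamiltonian path if and only if the coefficient in p(G,n) of the monomial x_1^c x_2^c ⋯ x_n^c (degree cn) is nonzero. -/

import Mathlib

/-! Expanding the recursion, `P (m+1) i` is the sum of the monomials `∏_{v ∈ W} x_v ^ c` over all
walks `W` of length `m` starting at `i`.  Coefficients are natural numbers, so nothing cancels, and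
a monomial occurs in `P (m+1) i` exactly when it is the monomial of some such walk
(`coeff_ne_zero_iff_exists_walk`).  The exponent of `x_v` in the monomial of `W` is `c` times the
number of visits of `W` to `v`; as `c ≥ 1`, the monomial is `x_1 ^ c ⋯ x_n ^ c` exactly when `W`
visits every vertex once, i.e. is Hamiltonian (`walkExponent_eq_iff`).  A Hamiltonian walk
automatically has length `n - 1`, so it is accounted for in `P n`. -/

/-- The exponent vector of the monomial `∏_{v ∈ W} x_v ^ c`, the product running over the vertices
visited by `W`, with multiplicity. -/
noncomputable def walkExponent {n : ℕ} {G : SimpleGraph (Fin n)} (c : ℕ) {u w : Fin n}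
    (W : G.Walk u w) : Fin n →₀ ℕ :=
  (W.support.map fun v => Finsupp.single v c).sum

lemma walkExponent_apply {n : ℕ} {G : SimpleGraph (Fin n)} (c : ℕ) {u w : Fin n}
    (W : G.Walk u w) (v : Fin n) : walkExponent c W v = c * W.support.count v := by
  unfold walkExponent
  induction W.support with
  | nil => simp
  | cons a l ih =>
    rw [List.map_cons, List.sum_cons, Finsupp.add_apply, ih, List.count_cons,
      Finsupp.single_apply]
    by_cases h : a = v
    · simp [h]; ring
    · simp [h]

lemma walkExponent_eq_iff {n : ℕ} {G : SimpleGraph (Fin n)} {c : ℕ} (hc : 1 ≤ c) {u w : Fin n}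
    (W : G.Walk u w) :
    (∑ i : Fin n, Finsupp.single i c) = walkExponent c W ↔ W.IsHamiltonian := by
  rw [Finsupp.ext_iff]
  refine forall_congr' fun v => ?_
  have hsum : (∑ i : Fin n, Finsupp.single i c) v = c := by
    simp [Finsupp.finsetSum_apply, Finsupp.single_apply]
  rw [hsum, walkExponent_apply, eq_comm, Nat.mul_eq_left (by omega)]

/-- The monomials occurring in `P (m+1) i` are those of the walks of length `m` from `i`. -/
lemma coeff_ne_zero_iff_exists_walk {n : ℕ} (G : SimpleGraph (Fin n)) [DecidableRel G.Adj] (c : ℕ)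
    (P : ℕ → Fin n → MvPolynomial (Fin n) ℕ)
    (hP1 : ∀ i : Fin n, P 1 i = MvPolynomial.X i ^ c)
    (hPsucc : ∀ m : ℕ, 1 ≤ m → ∀ i : Fin n,
      P (m + 1) i = MvPolynomial.X i ^ c * ∑ j ∈ G.neighborFinset i, P m j)
    (m : ℕ) (i : Fin n) (d : Fin n →₀ ℕ) :
    MvPolynomial.coeff d (P (m + 1) i) ≠ 0 ↔
      ∃ (w : Fin n) (W : G.Walk i w), W.length = m ∧ d = walkExponent c W := by
  induction m generalizing i d with
  | zero =>
    rw [hP1, MvPolynomial.coeff_X_pow]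
    constructor
    · intro h
      refine ⟨i, .nil, rfl, ?_⟩
      by_contra hd
      exact h (if_neg fun h' => hd (by simp [walkExponent, h']))
    · rintro ⟨w, W, hW, rfl⟩
      cases W with
      | nil => simp [walkExponent]
      | cons _ _ => simp at hW
  | succ m ih =>
    rw [hPsucc (m + 1) (by omega), MvPolynomial.X_pow_eq_monomial,
      MvPolynomial.coeff_monomial_mul', MvPolynomial.coeff_sum]
    constructor
    · intro h
      by_cases hle : Finsupp.single i c ≤ d
      · rw [if_pos hle, one_mul] at h
        obtain ⟨j, hj, hne⟩ := Finset.exists_ne_zero_of_sum_ne_zero h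
        obtain ⟨w, W, hW, hd⟩ := (ih j _).mp hne
        refine ⟨w, .cons ((G.mem_neighborFinset i j).mp hj) W, by simp [hW], ?_⟩
        rw [← add_tsub_cancel_of_le hle, hd]
        simp [walkExponent]
      · exact absurd (if_neg hle) h
    · rintro ⟨w, W, hW, rfl⟩
      cases W with
      | nil => simp at hW
      | @cons _ j _ hij W =>
        have he : walkExponent c (.cons hij W) = Finsupp.single i c + walkExponent c W := by
          simp [walkExponent]
        rw [he, if_pos le_self_add, one_mul, add_tsub_cancel_left]
        -- The terms are natural numbers, so a single nonzero one makes the sum nonzero.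
        intro h0
        exact (ih j _).mpr ⟨w, W, by simpa using hW, rfl⟩
          (Finset.sum_eq_zero_iff.mp h0 j ((G.mem_neighborFinset i j).mpr hij))


/-- Let `G` be a simple graph on `{1,…,n}` with `n ≥ 1`, `c ≥ 1`, and let `P k i` be the
polynomials over `ℕ` defined by `P 1 i = x_i^c` and
`P (k+1) i = x_i^c · (∑_{j adjacent to i} P k j)` for `k ≥ 1`; put
`p(G,n) = ∑_{i=1}^n P n i`.  Then `G` has a Hamiltonian path iff the coefficient in
`p(G,n)` of the monomial `x_1^c ⋯ x_n^c` is nonzero. -/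
theorem hamiltonianPath_polynomial_coeff (n : ℕ) (hn : 1 ≤ n)
    (G : SimpleGraph (Fin n)) [DecidableRel G.Adj] (c : ℕ) (hc : 1 ≤ c)
    (P : ℕ → Fin n → MvPolynomial (Fin n) ℕ)
    (hP1 : ∀ i : Fin n, P 1 i = MvPolynomial.X i ^ c)
    (hPsucc : ∀ m : ℕ, 1 ≤ m → ∀ i : Fin n,
      P (m + 1) i = MvPolynomial.X i ^ c * ∑ j ∈ G.neighborFinset i, P m j) :
    (∃ (u w : Fin n) (W : G.Walk u w), W.IsHamiltonian) ↔
      MvPolynomial.coeff (∑ i : Fin n, Finsupp.single i c) (∑ i : Fin n, P n i) ≠ 0 := by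
  obtain ⟨k, rfl⟩ : ∃ k, n = k + 1 := ⟨n - 1, by omega⟩
  have key := coeff_ne_zero_iff_exists_walk G c P hP1 hPsucc k
  rw [MvPolynomial.coeff_sum]
  constructor
  · rintro ⟨u, w, W, hW⟩ h0
    exact (key u _).mpr ⟨w, W, by simpa using hW.length_eq, (walkExponent_eq_iff hc W).mpr hW⟩
      (Finset.sum_eq_zero_iff.mp h0 u (Finset.mem_univ u))
  · intro h
    obtain ⟨u, -, hu⟩ := Finset.exists_ne_zero_of_sum_ne_zero h
    obtain ⟨w, W, -, hd⟩ := (key u _).mp hu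
    exact ⟨u, w, W, (walkExponent_eq_iff hc W).mp hd⟩
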